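/- Let X₀, …, X_{l+1} be Banach spaces with open subsets Ω_i ⊆ X_i, and let f_i : Ω_i → Ω_{i+1} (0 ≤ i ≤ l) be sufficiently differentiable maps. Fix x ∈ Ω₀, set x₀ := x and x_{i+1} := f_i(x_i), and fix v₁, …, v_m ∈ X₀. For A ⊆ {1,…,m}, define ∇_A f₀|_{x₀} := ∇^{|A|} f₀|_{x₀}(∨_{i∈A} v_i), and recursively, for a nested partition 𝒫 ∈ 𝒫^l(A), define ∇_𝒫 f_{l+1}|_{x_{l+1}} := ∇^{|𝒫|} f_{l+1}|_{x_{l+1}}(∨_{P∈𝒫} ∇_P f_l|_{x_l}). Then ∇^m(f_l ∘ ⋯ ∘ f₁ ∘ f₀)|_x(v₁,…,v_m) = Σ_{𝒫 ∈ 𝒫^l(m)} ∇_𝒫 f_l|_{x_l}. -/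

import Mathlib

open scoped Classical

noncomputable section

/-- The point sequence `x₀, x₁ = f₀(x₀), x₂ = f₁(x₁), …` of a composition chain. -/
def seqPt {X : ℕ → Type*} (f : ∀ i, X i → X (i + 1)) (x0 : X 0) : ∀ i, X i
  | 0 => x0
  | i + 1 => f i (seqPt f x0 i)

/-- The composition `f_l ∘ ⋯ ∘ f₁ ∘ f₀`. -/
def compChain {X : ℕ → Type*} (f : ∀ i, X i → X (i + 1)) : ∀ l, X 0 → X (l + 1)
  | 0 => f 0
  | l + 1 => fun x => f (l + 1) (compChain f l x)

/-- `P` is a partition of `Fin m` into pairwise disjoint nonempty subsets. -/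
def IsPartitionOf {m : ℕ} (P : Finset (Finset (Fin m))) : Prop :=
  (∅ : Finset (Fin m)) ∉ P ∧ (∀ S ∈ P, ∀ T ∈ P, S ≠ T → Disjoint S T) ∧
    ∀ i : Fin m, ∃ S ∈ P, i ∈ S

/-- A refinement chain `π 0 ⪯ π 1 ⪯ ⋯ ⪯ π (l-1)` of partitions of `Fin m`;
such chains are in canonical bijection with the nested partitions `𝒫^l(m)`:
the blocks of `π (l-1)` are the top-level blocks, each block of `π (j+1)` is
partitioned by the blocks of `π j` contained in it. -/
def IsNestedChain (m l : ℕ) (π : Fin l → Finset (Finset (Fin m))) : Prop :=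
  (∀ j, IsPartitionOf (π j)) ∧
    ∀ j : Fin l, ∀ hj : (j : ℕ) + 1 < l, ∀ S ∈ π j, ∃ T ∈ π ⟨(j : ℕ) + 1, hj⟩, S ⊆ T

variable {X : ℕ → Type*} [∀ i, NormedAddCommGroup (X i)] [∀ i, NormedSpace ℝ (X i)]

/-- The recursively defined quantity `∇_𝒫 f_i|_{x_i}` for a nested partition, encoded by a
refinement chain `π` (with the convention that `π` is accessed at levels `1, …, l`):
`nestedVal f x0 v π i B` is the value `∇_{𝒫_B} f_i` associated with the nested partition
of the block `B` induced by the levels `π 1, …, π i` of the chain. At level `0`,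
`∇_A f₀ = ∇^{|A|} f₀ (∨_{i ∈ A} v_i)`; at level `i+1` one applies
`∇^{|blocks|} f_{i+1}` to the values of the blocks of `π (i+1)` contained in `B`. -/
def nestedVal (f : ∀ i, X i → X (i + 1)) (x0 : X 0) {m : ℕ} (v : Fin m → X 0)
    (π : ℕ → Finset (Finset (Fin m))) : ∀ i, Finset (Fin m) → X (i + 1)
  | 0, B => iteratedFDeriv ℝ B.card (f 0) (seqPt f x0 0) (fun j => v (B.orderEmbOfFin rfl j))
  | i + 1, B =>
      iteratedFDeriv ℝ ((π (i + 1)).filter (fun S => S ⊆ B)).card (f (i + 1))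
        (seqPt f x0 (i + 1))
        (fun j => nestedVal f x0 v π i
          ((((π (i + 1)).filter (fun S => S ⊆ B)).equivFin.symm j : Finset (Fin m))))

/-!
By the Faà di Bruno formula for `(f_l ∘ ⋯ ∘ f₁) ∘ f₀`, the `m`-th derivative is a sum over
partitions of `{1, …, m}`, which serve as the finest levels of the chains. Such a partition is the
family of fibres of a surjection `q : Fin m → Fin k`, and the coarser partitions above it are
exactly the preimages under `q` of partitions of `Fin k`, so that induction on `l` applies to the
`k`-th derivative of `f_l ∘ ⋯ ∘ f₁`. Iterated derivatives are symmetric, hence it does not matter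
in which order the blocks are enumerated; a canonical order, by increasing maxima, identifies the
`OrderedFinpartition`s of the Faà di Bruno formula with unordered partitions.
-/

open Function Set Topology

theorem comp_swap_castSucc_succ_succ {n : ℕ} {E : Type*} (v : Fin (n + 2) → E) (j : Fin n) :
    v ∘ Equiv.swap j.succ.castSucc j.succ.succ =
      Fin.cons (v 0) (Fin.tail v ∘ Equiv.swap j.castSucc j.succ) := by
  funext i
  cases i using Fin.cases with
  | zero => simp [Equiv.swap_apply_of_ne_of_ne, Fin.ext_iff]
  | succ i =>
    rw [Fin.cons_succ, comp_apply, comp_apply, Fin.tail, Fin.castSucc_succ,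
      (Fin.succ_injective _).swap_apply]

section IteratedFDeriv

variable {𝕜 E F α β : Type*} [NontriviallyNormedField 𝕜]
  [NormedAddCommGroup E] [NormedSpace 𝕜 E] [NormedAddCommGroup F] [NormedSpace 𝕜 F]
  {f : E → F} {x : E} {n : ℕ}

theorem iteratedFDeriv_add_two_apply_left (hf : ContDiffAt 𝕜 (n + 2 : ℕ) f x)
    (v : Fin (n + 2) → E) :
    iteratedFDeriv 𝕜 (n + 2) f x v =
      fderiv 𝕜 (fderiv 𝕜 (iteratedFDeriv 𝕜 n f)) x (v 0) (v 1) (Fin.tail (Fin.tail v)) := by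
  have hd : DifferentiableAt 𝕜 (iteratedFDeriv 𝕜 (n + 1) f) x :=
    hf.differentiableAt_iteratedFDeriv (by norm_cast; omega)
  have hd' : DifferentiableAt 𝕜 (fderiv 𝕜 (iteratedFDeriv 𝕜 n f)) x :=
    ((hf.iteratedFDeriv_right (m := 2) (by norm_cast; omega)).fderiv_right (m := 1)
      (by norm_num)).differentiableAt (by simp)
  calc iteratedFDeriv 𝕜 (n + 2) f x v
    _ = fderiv 𝕜 (fun y ↦ iteratedFDeriv 𝕜 (n + 1) f y (Fin.tail v)) x (v 0) := by
      rw [iteratedFDeriv_succ_apply_left, fderiv_continuousMultilinear_apply_const_apply hd]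
    _ = fderiv 𝕜 (fun y ↦ fderiv 𝕜 (iteratedFDeriv 𝕜 n f) y (v 1) (Fin.tail (Fin.tail v))) x
          (v 0) := rfl
    _ = _ := by
      rw [fderiv_continuousMultilinear_apply_const_apply (by fun_prop),
        fderiv_clm_apply hd' (by fun_prop)]
      simp

theorem iteratedFDeriv_succ_cons_comp_perm (hf : ContDiffAt 𝕜 (n + 1) f x)
    {σ : Equiv.Perm (Fin n)}
    (hσ : ∀ᶠ y in 𝓝 x, ∀ v, iteratedFDeriv 𝕜 n f y (v ∘ σ) = iteratedFDeriv 𝕜 n f y v)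
    (a : E) (v : Fin n → E) :
    iteratedFDeriv 𝕜 (n + 1) f x (Fin.cons a (v ∘ σ)) =
      iteratedFDeriv 𝕜 (n + 1) f x (Fin.cons a v) := by
  have hd : DifferentiableAt 𝕜 (iteratedFDeriv 𝕜 n f) x :=
    hf.differentiableAt_iteratedFDeriv (by norm_cast; omega)
  have hσv : (fun y ↦ iteratedFDeriv 𝕜 n f y (v ∘ σ)) =ᶠ[𝓝 x] fun y ↦ iteratedFDeriv 𝕜 n f y v :=
    hσ.mono fun y hy ↦ hy v
  simp only [iteratedFDeriv_succ_apply_left, Fin.cons_zero, Fin.tail_cons]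
  rw [← fderiv_continuousMultilinear_apply_const_apply hd,
    ← fderiv_continuousMultilinear_apply_const_apply hd, hσv.fderiv_eq]

variable [IsRCLikeNormedField 𝕜]

theorem iteratedFDeriv_comp_swap_zero_one (hf : ContDiffAt 𝕜 (n + 2 : ℕ) f x)
    (v : Fin (n + 2) → E) :
    iteratedFDeriv 𝕜 (n + 2) f x (v ∘ Equiv.swap 0 1) = iteratedFDeriv 𝕜 (n + 2) f x v := by
  have hsymm : IsSymmSndFDerivAt 𝕜 (iteratedFDeriv 𝕜 n f) x :=
    (hf.iteratedFDeriv_right (m := 2) (by norm_cast; omega)).isSymmSndFDerivAt (by simp)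
  have htail : Fin.tail (Fin.tail (v ∘ Equiv.swap 0 1)) = Fin.tail (Fin.tail v) := by
    funext j
    exact congrArg v (Equiv.swap_apply_of_ne_of_ne (by simp [Fin.ext_iff]) (by simp [Fin.ext_iff]))
  rw [iteratedFDeriv_add_two_apply_left hf, iteratedFDeriv_add_two_apply_left hf, htail]
  simp only [comp_apply, Equiv.swap_apply_left, Equiv.swap_apply_right]
  rw [hsymm.eq]

theorem iteratedFDeriv_comp_perm_of_contDiffAt (hf : ContDiffAt 𝕜 n f x)
    (σ : Equiv.Perm (Fin n)) (v : Fin n → E) :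
    iteratedFDeriv 𝕜 n f x (v ∘ σ) = iteratedFDeriv 𝕜 n f x v := by
  induction n generalizing x with
  | zero => rw [Subsingleton.elim (v ∘ σ) v]
  | succ n ih =>
    have hσ : σ ∈ Submonoid.closure (range fun i : Fin n ↦ Equiv.swap i.castSucc i.succ) :=
      Equiv.Perm.mclosure_swap_castSucc_succ n ▸ Submonoid.mem_top σ
    induction hσ using Submonoid.closure_induction generalizing v with
    | one => rfl
    | mul σ τ _ _ hσ hτ => rw [Equiv.Perm.coe_mul, ← comp_assoc, hτ, hσ]
    | mem _ hswap =>
      obtain ⟨i, rfl⟩ := hswap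
      cases n with
      | zero => exact i.elim0
      | succ n =>
        cases i using Fin.cases with
        | zero => exact iteratedFDeriv_comp_swap_zero_one hf v
        | succ j =>
          have hnear : ∀ᶠ y in 𝓝 x, ContDiffAt 𝕜 (n + 1 : ℕ) f y :=
            (hf.of_le (by norm_cast; omega)).eventually (by simp)
          rw [comp_swap_castSucc_succ_succ,
            iteratedFDeriv_succ_cons_comp_perm hf (hnear.mono fun y hy ↦ ih hy _),
            Fin.cons_self_tail]

/-- The value `∇^{|s|} f|_x (⋁_{i ∈ s} w i)` of the iterated derivative on a family of vectors
indexed by a finite set. The vectors are listed in an arbitrary order, which does not matter when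
`f` is `|s|` times continuously differentiable at `x`. -/
def symmIteratedFDeriv (𝕜 : Type*) [NontriviallyNormedField 𝕜] [NormedSpace 𝕜 E] [NormedSpace 𝕜 F]
    (f : E → F) (x : E) (s : Finset α) (w : α → E) : F :=
  iteratedFDeriv 𝕜 s.card f x fun j ↦ w (s.equivFin.symm j)

theorem iteratedFDeriv_comp_eq_symmIteratedFDeriv (hf : ContDiffAt 𝕜 n f x) {a : Fin n → α}
    (ha : Injective a) {s : Finset α} (hs : range a = s) (w : α → E) :
    iteratedFDeriv 𝕜 n f x (w ∘ a) = symmIteratedFDeriv 𝕜 f x s w := by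
  let e : Fin n ≃ s := (Equiv.ofInjective a ha).trans (Equiv.setCongr hs)
  have hn : n = s.card := by simpa using Fintype.card_congr e
  subst hn
  have he (i : s) : a (e.symm i) = i := Equiv.apply_ofInjective_symm ha _
  rw [symmIteratedFDeriv,
    ← iteratedFDeriv_comp_perm_of_contDiffAt hf (s.equivFin.symm.trans e.symm)]
  congr 1
  funext j
  exact congrArg w (he _)

theorem symmIteratedFDeriv_image [DecidableEq α] {s : Finset β} (hf : ContDiffAt 𝕜 s.card f x)
    {g : β → α} (hg : InjOn g s) (w : α → E) :
    symmIteratedFDeriv 𝕜 f x (s.image g) w = symmIteratedFDeriv 𝕜 f x s (w ∘ g) := by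
  refine (iteratedFDeriv_comp_eq_symmIteratedFDeriv hf (a := fun j ↦ g (s.equivFin.symm j))
    (fun i j hij ↦ ?_) ?_ w).symm
  · exact s.equivFin.symm.injective (Subtype.ext (hg (Subtype.prop _) (Subtype.prop _) hij))
  · calc range (fun j ↦ g (s.equivFin.symm j))
      _ = range fun i : s ↦ g i := s.equivFin.symm.surjective.range_comp fun i : s ↦ g i
      _ = ↑(s.image g) := by rw [Finset.coe_image, image_eq_range]; rfl

end IteratedFDeriv

section Sorting

variable {ι β κ : Type*} [LinearOrder ι] [Finite ι] [LinearOrder κ] {key : β → κ}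

theorem eq_of_strictMono_comp_of_range_eq {b b' : ι → β} (hb : StrictMono (key ∘ b))
    (hb' : StrictMono (key ∘ b')) (h : range b = range b') : b = b' := by
  have hkey : key ∘ b = key ∘ b' := (hb.range_inj hb').1 (by rw [range_comp, range_comp, h])
  funext i
  obtain ⟨j, hj⟩ : b i ∈ range b' := h ▸ mem_range_self i
  have hij : j = i := hb'.injective (by rw [comp_apply, hj]; exact congrFun hkey i)
  rw [← hj, hij]

end Sorting

theorem exists_strictMono_comp_range_eq {β κ : Type*} [LinearOrder κ] {key : β → κ}
    {s : Finset β} (hs : InjOn key s) :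
    ∃ b : Fin s.card → β, StrictMono (key ∘ b) ∧ range b = s := by
  let o := (s.image key).orderEmbOfFin (Finset.card_image_of_injOn hs)
  have ho (i) : ∃ S ∈ s, key S = o i :=
    Finset.mem_image.1 (Finset.orderEmbOfFin_mem _ (Finset.card_image_of_injOn hs) i)
  choose b hbs hb using ho
  have hkey : key ∘ b = o := funext hb
  refine ⟨b, hkey ▸ o.strictMono, Subset.antisymm (range_subset_iff.2 hbs) fun S hS ↦ ?_⟩
  obtain ⟨i, hi⟩ : key S ∈ range o := by
    rw [Finset.range_orderEmbOfFin, Finset.coe_image]; exact mem_image_of_mem key hS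
  exact ⟨i, hs (hbs i) hS ((hb i).trans hi)⟩

section Preimage

variable {α β : Type*} [Fintype α] {q : α → β}

/-- The preimage of a finite set under `q`, as a finite set: the union of the fibres of `q` over
the points of `B`. -/
def finsetPreimage (q : α → β) (B : Finset β) : Finset α := {a | q a ∈ B}

@[simp]
theorem mem_finsetPreimage {B : Finset β} {a : α} : a ∈ finsetPreimage q B ↔ q a ∈ B := by
  simp [finsetPreimage]

theorem coe_finsetPreimage (q : α → β) (B : Finset β) : (finsetPreimage q B : Set α) = q ⁻¹' B := by
  ext; simp

theorem finsetPreimage_univ [Fintype β] (q : α → β) :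
    finsetPreimage q Finset.univ = Finset.univ := by
  ext; simp

theorem finsetPreimage_subset_finsetPreimage (hq : Surjective q) {B C : Finset β} :
    finsetPreimage q B ⊆ finsetPreimage q C ↔ B ⊆ C := by
  rw [← Finset.coe_subset, coe_finsetPreimage, coe_finsetPreimage,
    hq.preimage_subset_preimage_iff, Finset.coe_subset]

theorem finsetPreimage_injective (hq : Surjective q) : Injective (finsetPreimage q) :=
  fun _ _ h ↦ Finset.Subset.antisymm ((finsetPreimage_subset_finsetPreimage hq).1 h.le)
    ((finsetPreimage_subset_finsetPreimage hq).1 h.ge)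

theorem finsetPreimage_image_of_saturated [DecidableEq β] {S : Finset α}
    (hS : ∀ a b, q a = q b → b ∈ S → a ∈ S) :
    finsetPreimage q (S.image q) = S := by
  ext a
  simp only [mem_finsetPreimage, Finset.mem_image]
  exact ⟨fun ⟨b, hb, hab⟩ ↦ hS a b hab.symm hb, fun ha ↦ ⟨a, ha, rfl⟩⟩

theorem filter_subset_image_finsetPreimage [DecidableEq α] [DecidableEq β] (hq : Surjective q)
    (P : Finset (Finset β)) (B : Finset β) :
    (P.image (finsetPreimage q)).filter (· ⊆ finsetPreimage q B) =
      (P.filter (· ⊆ B)).image (finsetPreimage q) := by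
  simp only [Finset.filter_image, finsetPreimage_subset_finsetPreimage hq]

end Preimage

section Partition

variable {m k : ℕ} {P : Finset (Finset (Fin m))} {q : Fin m → Fin k}

theorem IsPartitionOf.nonempty (h : IsPartitionOf P) {S : Finset (Fin m)} (hS : S ∈ P) :
    S.Nonempty :=
  Finset.nonempty_iff_ne_empty.2 (ne_of_mem_of_not_mem hS h.1)

theorem IsPartitionOf.eq_of_mem (h : IsPartitionOf P) {S T : Finset (Fin m)} (hS : S ∈ P)
    (hT : T ∈ P) {x : Fin m} (hxS : x ∈ S) (hxT : x ∈ T) : S = T :=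
  by_contra fun hne ↦ Finset.disjoint_left.1 (h.2.1 S hS T hT hne) hxS hxT

theorem isPartitionOf_image_finsetPreimage (hq : Surjective q) {P : Finset (Finset (Fin k))} :
    IsPartitionOf (P.image (finsetPreimage q)) ↔ IsPartitionOf P := by
  have hempty : finsetPreimage q ∅ = ∅ := by ext; simp
  have hdisj (B C : Finset (Fin k)) :
      Disjoint (finsetPreimage q B) (finsetPreimage q C) ↔ Disjoint B C := by
    rw [← Finset.disjoint_coe, coe_finsetPreimage, coe_finsetPreimage,
      disjoint_preimage_iff hq, Finset.disjoint_coe]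
  refine and_congr ?_ (and_congr ?_ ?_)
  · rw [← hempty, (finsetPreimage_injective hq).mem_finset_image]
  · simp only [Finset.forall_mem_image, hdisj, ne_eq, (finsetPreimage_injective hq).eq_iff]
  · simp only [Finset.exists_mem_image, mem_finsetPreimage]
    exact (hq.forall (p := fun i ↦ ∃ S ∈ P, i ∈ S)).symm

theorem isPartitionOf_image_singleton (k : ℕ) :
    IsPartitionOf ((Finset.univ : Finset (Fin k)).image singleton) := by
  refine ⟨by simp, ?_, fun i ↦ ⟨{i}, by simp⟩⟩
  simp only [Finset.forall_mem_image, Finset.disjoint_singleton, ne_eq, Finset.singleton_inj]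
  exact fun _ _ _ _ h ↦ h

/-- The partition of `Fin m` into the fibres of `q`, which are nonempty when `q` is surjective. -/
def fiberPartition (q : Fin m → Fin k) : Finset (Finset (Fin m)) :=
  (Finset.univ.image singleton).image (finsetPreimage q)

theorem coe_fiberPartition (q : Fin m → Fin k) :
    (fiberPartition q : Set (Finset (Fin m))) = range fun i ↦ finsetPreimage q {i} := by
  ext; simp [fiberPartition]

end Partition

section OrderedFinpartition

variable {m : ℕ}

theorem index_emb (c : OrderedFinpartition m) (i : Fin c.length) (j : Fin (c.partSize i)) :
    c.index (c.emb i j) = i :=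
  by_contra fun h ↦ c.emb_ne_emb_of_ne h (c.emb_invEmbedding (c.emb i j))

theorem index_surjective (c : OrderedFinpartition m) : Surjective c.index :=
  fun i ↦ ⟨c.emb i ⟨0, c.partSize_pos i⟩, index_emb c i _⟩

theorem range_emb (c : OrderedFinpartition m) (i : Fin c.length) :
    range (c.emb i) = ↑(finsetPreimage c.index {i}) := by
  ext a
  simp only [mem_range, Finset.mem_coe, mem_finsetPreimage, Finset.mem_singleton]
  exact ⟨fun ⟨j, hj⟩ ↦ hj ▸ index_emb c i j, fun h ↦ h ▸ ⟨_, c.emb_invEmbedding a⟩⟩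

theorem max_finsetPreimage_index_singleton (c : OrderedFinpartition m) (i : Fin c.length) :
    (finsetPreimage c.index {i}).max =
      c.emb i ⟨c.partSize i - 1, Nat.sub_one_lt_of_lt (c.partSize_pos i)⟩ := by
  refine le_antisymm (Finset.max_le fun a ha ↦ WithBot.coe_le_coe.2 ?_) (Finset.le_max ?_)
  · obtain ⟨j, rfl⟩ : a ∈ range (c.emb i) := range_emb c i ▸ ha
    exact (c.emb_strictMono i).monotone (Fin.le_def.2 (Nat.le_sub_one_of_lt j.2))
  · simp [index_emb]

theorem strictMono_max_finsetPreimage_index (c : OrderedFinpartition m) :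
    StrictMono (Finset.max ∘ fun i ↦ finsetPreimage c.index {i}) := fun i j hij ↦ by
  simp only [comp_apply, max_finsetPreimage_index_singleton, WithBot.coe_lt_coe]
  exact c.parts_strictMono hij

theorem orderedFinpartition_ext {c c' : OrderedFinpartition m} (hlength : c.length = c'.length)
    (hrange : ∀ i, range (c.emb i) = range (c'.emb (Fin.cast hlength i))) : c = c' := by
  obtain ⟨length, size, _, emb, hemb, _, _, _⟩ := c
  obtain ⟨length', size', _, emb', hemb', _, _, _⟩ := c'
  change length = length' at hlength
  subst hlength
  obtain rfl : size = size' := by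
    funext i
    have h := congrArg Set.ncard (hrange i)
    simpa only [Fin.cast_eq_self, ← image_univ, ncard_image_of_injective _ (hemb i).injective,
      ncard_image_of_injective _ (hemb' i).injective, ncard_univ, Nat.card_fin] using h
  obtain rfl : emb = emb' := funext fun i ↦ ((hemb i).range_inj (hemb' i)).1 (hrange i)
  rfl

theorem card_fiberPartition_index (c : OrderedFinpartition m) :
    (fiberPartition c.index).card = c.length := by
  rw [fiberPartition,
    Finset.card_image_of_injective _ (finsetPreimage_injective (index_surjective c)),
    Finset.card_image_of_injective _ Finset.singleton_injective, Finset.card_fin]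

theorem fiberPartition_index_injective :
    Injective fun c : OrderedFinpartition m ↦ fiberPartition c.index := fun c c' h ↦ by
  have hlength : c.length = c'.length :=
    (card_fiberPartition_index c).symm.trans
      ((congrArg Finset.card h).trans (card_fiberPartition_index c'))
  have hblock : (fun i ↦ finsetPreimage c.index {i}) =
      (fun i ↦ finsetPreimage c'.index {i}) ∘ Fin.cast hlength := by
    refine eq_of_strictMono_comp_of_range_eq (strictMono_max_finsetPreimage_index c)
      ((strictMono_max_finsetPreimage_index c').comp (Fin.cast_strictMono hlength)) ?_
    have hcast : Surjective (Fin.cast hlength) := (finCongr hlength).surjective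
    rw [hcast.range_comp, ← coe_fiberPartition, ← coe_fiberPartition]
    exact congrArg _ h
  refine orderedFinpartition_ext hlength fun i ↦ ?_
  rw [range_emb, range_emb]
  exact congrArg _ (congrFun hblock i)

/-- The ordered partition of `Fin m` with the given blocks, listed by increasing maxima. -/
def orderedFinpartitionOfBlocks {k : ℕ} (b : Fin k → Finset (Fin m)) (hne : ∀ i, (b i).Nonempty)
    (hmax : StrictMono fun i ↦ (b i).max' (hne i)) (hdisj : Pairwise (Disjoint on b))
    (hcover : ∀ a, ∃ i, a ∈ b i) : OrderedFinpartition m where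
  length := k
  partSize i := (b i).card
  partSize_pos i := (hne i).card_pos
  emb i := (b i).orderEmbOfFin rfl
  emb_strictMono i := OrderEmbedding.strictMono _
  parts_strictMono := by
    simpa only [Finset.orderEmbOfFin_last rfl (hne _).card_pos] using hmax
  disjoint i _ j _ hij := by
    simpa only [onFun, Finset.range_orderEmbOfFin, Finset.disjoint_coe] using hdisj hij
  cover a := by simpa only [Finset.range_orderEmbOfFin, Finset.mem_coe] using hcover a

theorem IsPartitionOf.injOn_max {P : Finset (Finset (Fin m))} (hP : IsPartitionOf P) :
    InjOn Finset.max (P : Set (Finset (Fin m))) := fun S hS T hT h ↦ by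
  obtain ⟨a, ha⟩ := Finset.max_of_nonempty (hP.nonempty hS)
  exact hP.eq_of_mem hS hT (Finset.mem_of_max ha) (Finset.mem_of_max (h ▸ ha))

theorem exists_fiberPartition_index_eq {P : Finset (Finset (Fin m))} (hP : IsPartitionOf P) :
    ∃ c : OrderedFinpartition m, fiberPartition c.index = P := by
  obtain ⟨b, hmono, hrange⟩ := exists_strictMono_comp_range_eq hP.injOn_max
  have hbP (i) : b i ∈ P := Finset.mem_coe.1 (hrange ▸ mem_range_self i)
  have hne (i) : (b i).Nonempty := hP.nonempty (hbP i)
  have hmax : StrictMono fun i ↦ (b i).max' (hne i) := fun i j hij ↦ by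
    simpa only [comp_apply, ← Finset.coe_max' (hne _), WithBot.coe_lt_coe] using hmono hij
  have hinj : Injective b := hmono.injective.of_comp
  have hcover (a) : ∃ i, a ∈ b i := by
    obtain ⟨S, hS, ha⟩ := hP.2.2 a
    obtain ⟨i, rfl⟩ : S ∈ range b := hrange ▸ hS
    exact ⟨i, ha⟩
  let c := orderedFinpartitionOfBlocks b hne hmax
    (fun i j hij ↦ hP.2.1 _ (hbP i) _ (hbP j) (hinj.ne hij)) hcover
  have hc (i : Fin c.length) : finsetPreimage c.index {i} = b i :=
    Finset.coe_injective ((range_emb c i).symm.trans (Finset.range_orderEmbOfFin _ rfl))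
  refine ⟨c, Finset.coe_injective ?_⟩
  rw [coe_fiberPartition, ← hrange]
  exact congrArg range (funext hc)

theorem IsPartitionOf.card_le {P : Finset (Finset (Fin m))} (hP : IsPartitionOf P) :
    P.card ≤ m := by
  obtain ⟨c, rfl⟩ := exists_fiberPartition_index_eq hP
  exact (card_fiberPartition_index c).trans_le c.length_le

end OrderedFinpartition

section NestedChain

variable {m k l : ℕ} {q : Fin m → Fin k}

theorem isNestedChain_cons {P : Finset (Finset (Fin m))} {π : Fin l → Finset (Finset (Fin m))} :
    IsNestedChain m (l + 1) (Fin.cons P π) ↔ IsPartitionOf P ∧ IsNestedChain m l π ∧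
      ∀ hl : 0 < l, ∀ S ∈ P, ∃ T ∈ π ⟨0, hl⟩, S ⊆ T := by
  simp only [IsNestedChain, Fin.forall_fin_succ, Fin.cons_zero, Fin.cons_succ, Fin.val_zero,
    Fin.val_succ, Nat.add_lt_add_iff_right]
  exact ⟨fun ⟨⟨hP, hπ⟩, hPπ, hππ⟩ ↦ ⟨hP, ⟨hπ, hππ⟩, hPπ⟩,
    fun ⟨hP, ⟨hπ, hππ⟩, hPπ⟩ ↦ ⟨⟨hP, hπ⟩, hPπ, hππ⟩⟩

theorem isNestedChain_cons_singletons {π : Fin l → Finset (Finset (Fin m))} :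
    IsNestedChain m (l + 1) (Fin.cons (Finset.univ.image singleton) π) ↔ IsNestedChain m l π := by
  rw [isNestedChain_cons]
  refine ⟨fun h ↦ h.2.1, fun h ↦ ⟨isPartitionOf_image_singleton m, h, fun hl ↦ ?_⟩⟩
  simpa only [Finset.forall_mem_image, Finset.mem_univ, Finset.singleton_subset_iff, true_imp_iff]
    using (h.1 ⟨0, hl⟩).2.2

theorem isNestedChain_image_finsetPreimage (hq : Surjective q)
    {π : Fin l → Finset (Finset (Fin k))} :
    IsNestedChain m l (fun j ↦ (π j).image (finsetPreimage q)) ↔ IsNestedChain k l π := by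
  simp only [IsNestedChain, isPartitionOf_image_finsetPreimage hq, Finset.forall_mem_image,
    Finset.exists_mem_image, finsetPreimage_subset_finsetPreimage hq]

theorem IsNestedChain.exists_superset {π : Fin (l + 1) → Finset (Finset (Fin m))}
    (hπ : IsNestedChain m (l + 1) π) {S : Finset (Fin m)} (hS : S ∈ π 0) (j : Fin (l + 1)) :
    ∃ T ∈ π j, S ⊆ T := by
  induction j using Fin.induction with
  | zero => exact ⟨S, hS, Finset.Subset.rfl⟩
  | succ j ih =>
    obtain ⟨T, hT, hST⟩ := ih
    obtain ⟨U, hU, hTU⟩ := hπ.2 j.castSucc (Nat.succ_lt_succ j.2) T hT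
    exact ⟨U, hU, hST.trans hTU⟩

/-- The chain of partitions of `Fin m` obtained from a chain of partitions of `Fin k` by pulling
back along `q : Fin m → Fin k` and prepending the partition into fibres of `q`. -/
def pullbackChain (q : Fin m → Fin k) (π : Fin l → Finset (Finset (Fin k))) :
    Fin (l + 1) → Finset (Finset (Fin m)) :=
  fun j ↦ (Fin.cons (α := fun _ ↦ Finset (Finset (Fin k))) (Finset.univ.image singleton) π j).image
    (finsetPreimage q)

theorem isNestedChain_pullbackChain (hq : Surjective q) {π : Fin l → Finset (Finset (Fin k))} :
    IsNestedChain m (l + 1) (pullbackChain q π) ↔ IsNestedChain k l π :=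
  (isNestedChain_image_finsetPreimage hq).trans isNestedChain_cons_singletons

theorem pullbackChain_injective (hq : Surjective q) :
    Injective (pullbackChain (l := l) q) := fun _ _ h ↦
  funext fun j ↦ Finset.image_injective (finsetPreimage_injective hq) (congrFun h j.succ)

theorem IsNestedChain.exists_pullbackChain_eq {π : Fin (l + 1) → Finset (Finset (Fin m))}
    (hπ : IsNestedChain m (l + 1) π) (hq : fiberPartition q = π 0) :
    ∃ π', pullbackChain q π' = π := by
  have hsat (j) {S : Finset (Fin m)} (hS : S ∈ π j) : finsetPreimage q (S.image q) = S := by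
    refine finsetPreimage_image_of_saturated fun a b hab hb ↦ ?_
    have hfiber : finsetPreimage q {q a} ∈ π 0 := by simp [← hq, fiberPartition]
    obtain ⟨T, hT, hsub⟩ := hπ.exists_superset hfiber j
    have hTS : T = S := (hπ.1 j).eq_of_mem hT hS (hsub (by simp [hab])) hb
    exact hTS ▸ hsub (by simp)
  refine ⟨fun j ↦ (π j.succ).image fun S ↦ S.image q, funext fun j ↦ ?_⟩
  cases j using Fin.cases with
  | zero => exact hq
  | succ j =>
    calc ((π j.succ).image fun S ↦ S.image q).image (finsetPreimage q)
      _ = (π j.succ).image id := by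
        rw [Finset.image_image]; exact Finset.image_congr fun S hS ↦ hsat _ hS
      _ = π j.succ := Finset.image_id

theorem sum_isNestedChain_zero {M : Type*} [AddCommMonoid M]
    (g : (Fin 0 → Finset (Finset (Fin m))) → M) :
    ∑ π with IsNestedChain m 0 π, g π = g Fin.elim0 := by
  rw [Finset.filter_true_of_mem fun π _ ↦ ⟨fun j ↦ j.elim0, fun j ↦ j.elim0⟩]
  exact Fintype.sum_subsingleton g _

theorem sum_isNestedChain_succ {M : Type*} [AddCommMonoid M]
    (g : (Fin (l + 1) → Finset (Finset (Fin m))) → M) :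
    ∑ π with IsNestedChain m (l + 1) π, g π =
      ∑ c : OrderedFinpartition m, ∑ π with IsNestedChain c.length l π,
        g (pullbackChain c.index π) := by
  rw [Finset.sum_sigma']
  symm
  refine Finset.sum_bij (fun p _ ↦ pullbackChain p.1.index p.2) ?_ ?_ ?_ fun _ _ ↦ rfl
  · intro p hp
    simpa [isNestedChain_pullbackChain (index_surjective p.1)] using hp
  · rintro ⟨c, π⟩ - ⟨c', π'⟩ - h
    obtain rfl : c = c' := fiberPartition_index_injective (congrFun h 0)
    exact congrArg _ (pullbackChain_injective (index_surjective c) h)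
  · intro π hπ
    have hπ : IsNestedChain m (l + 1) π := (Finset.mem_filter.1 hπ).2
    obtain ⟨c, hc⟩ := exists_fiberPartition_index_eq (hπ.1 0)
    obtain ⟨π', rfl⟩ := hπ.exists_pullbackChain_eq hc
    exact ⟨⟨c, π'⟩, by simpa [isNestedChain_pullbackChain (index_surjective c)] using hπ, rfl⟩

end NestedChain

section Composition

theorem seqPt_succ_eq_seqPt {Y : ℕ → Type*} (f : ∀ i, Y i → Y (i + 1)) (y : Y 0) (i : ℕ) :
    seqPt f y (i + 1) = seqPt (X := fun i ↦ Y (i + 1)) (fun i ↦ f (i + 1)) (f 0 y) i := by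
  induction i with
  | zero => rfl
  | succ i ih => exact congrArg (f (i + 1)) ih

theorem compChain_succ_eq_comp {Y : ℕ → Type*} (f : ∀ i, Y i → Y (i + 1)) (l : ℕ) :
    compChain f (l + 1) = compChain (X := fun i ↦ Y (i + 1)) (fun i ↦ f (i + 1)) l ∘ f 0 := by
  induction l with
  | zero => rfl
  | succ l ih => exact congrArg (f (l + 2) ∘ ·) ih

theorem compChain_eq_seqPt {Y : ℕ → Type*} (f : ∀ i, Y i → Y (i + 1)) (y : Y 0) (l : ℕ) :
    compChain f l y = seqPt f y (l + 1) := by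
  induction l with
  | zero => rfl
  | succ l ih => exact congrArg (f (l + 1)) ih

theorem contDiffAt_compChain {𝕜 : Type*} [NontriviallyNormedField 𝕜] {Y : ℕ → Type*}
    [∀ i, NormedAddCommGroup (Y i)] [∀ i, NormedSpace 𝕜 (Y i)] {f : ∀ i, Y i → Y (i + 1)}
    {y : Y 0} {n : WithTop ℕ∞} {l : ℕ} (hf : ∀ i ≤ l, ContDiffAt 𝕜 n (f i) (seqPt f y i)) :
    ContDiffAt 𝕜 n (compChain f l) y := by
  induction l with
  | zero => exact hf 0 le_rfl
  | succ l ih =>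
    have hlast : ContDiffAt 𝕜 n (f (l + 1)) (compChain f l y) :=
      compChain_eq_seqPt f y l ▸ hf (l + 1) le_rfl
    exact hlast.comp y (ih fun i hi ↦ hf i (hi.trans l.le_succ))

theorem iteratedFDeriv_comp_apply_eq_sum {𝕜 E F G : Type*} [NontriviallyNormedField 𝕜]
    [IsRCLikeNormedField 𝕜] [NormedAddCommGroup E] [NormedSpace 𝕜 E] [NormedAddCommGroup F]
    [NormedSpace 𝕜 F] [NormedAddCommGroup G] [NormedSpace 𝕜 G] {g : F → G} {f : E → F} {x : E}
    {m : ℕ} (hg : ContDiffAt 𝕜 m g (f x)) (hf : ContDiffAt 𝕜 m f x) (v : Fin m → E) :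
    iteratedFDeriv 𝕜 m (g ∘ f) x v =
      ∑ c : OrderedFinpartition m, iteratedFDeriv 𝕜 c.length g (f x)
        fun i ↦ symmIteratedFDeriv 𝕜 f x (finsetPreimage c.index {i}) v := by
  have hblock (c : OrderedFinpartition m) (i : Fin c.length) :
      iteratedFDeriv 𝕜 (c.partSize i) f x (v ∘ c.emb i) =
        symmIteratedFDeriv 𝕜 f x (finsetPreimage c.index {i}) v :=
    iteratedFDeriv_comp_eq_symmIteratedFDeriv (hf.of_le (Nat.cast_le.2 (c.partSize_le i)))
      (c.emb_strictMono i).injective (range_emb c i) v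
  simp only [← hblock]
  rw [iteratedFDeriv_comp hg hf le_rfl, FormalMultilinearSeries.taylorComp,
    sum_apply]
  rfl

end Composition

section NestedVal

variable {m k l : ℕ} {q : Fin m → Fin k} {π : Fin l → Finset (Finset (Fin k))}
  {f : ∀ i, X i → X (i + 1)} {x0 : X 0}

/-- The chain `π` with its levels numbered `1, …, l`, as `nestedVal` expects them; all other levels
are `∅`. -/
def extendChain (π : Fin l → Finset (Finset (Fin m))) (n : ℕ) : Finset (Finset (Fin m)) :=
  if h : n - 1 < l ∧ 1 ≤ n then π ⟨n - 1, h.1⟩ else ∅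

theorem card_extendChain_le (hπ : ∀ j, IsPartitionOf (π j)) (n : ℕ) :
    (extendChain π n).card ≤ k := by
  rw [extendChain]
  split
  · exact (hπ _).card_le
  · simp

theorem extendChain_pullbackChain_one : extendChain (pullbackChain q π) 1 = fiberPartition q := by
  simp [extendChain, pullbackChain, fiberPartition]

theorem extendChain_pullbackChain_add_two (i : ℕ) :
    extendChain (pullbackChain q π) (i + 2) = (extendChain π (i + 1)).image (finsetPreimage q) := by
  by_cases hi : i < l
  · simp only [extendChain]
    rw [dif_pos (by omega), dif_pos (by omega)]
    rfl
  · simp only [extendChain]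
    rw [dif_neg (by omega), dif_neg (by omega), Finset.image_empty]

theorem nestedVal_zero {B : Finset (Fin m)} (hf : ContDiffAt ℝ B.card (f 0) x0) (v : Fin m → X 0)
    (π : ℕ → Finset (Finset (Fin m))) :
    nestedVal f x0 v π 0 B = symmIteratedFDeriv ℝ (f 0) x0 B v :=
  iteratedFDeriv_comp_eq_symmIteratedFDeriv hf (B.orderEmbOfFin rfl).injective
    (B.range_orderEmbOfFin rfl) v

theorem nestedVal_succ (v : Fin m → X 0) (π : ℕ → Finset (Finset (Fin m))) (i : ℕ)
    (B : Finset (Fin m)) :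
    nestedVal f x0 v π (i + 1) B =
      symmIteratedFDeriv ℝ (f (i + 1)) (seqPt f x0 (i + 1)) ((π (i + 1)).filter (· ⊆ B))
        (nestedVal f x0 v π i) :=
  rfl

theorem nestedVal_pullbackChain (hq : Surjective q) (hπ : ∀ j, IsPartitionOf (π j)) {i : ℕ}
    (hf : ∀ j ≤ i + 1, ContDiffAt ℝ m (f j) (seqPt f x0 j)) (v : Fin m → X 0)
    (B : Finset (Fin k)) :
    nestedVal f x0 v (extendChain (pullbackChain q π)) (i + 1) (finsetPreimage q B) =
      nestedVal (X := fun i ↦ X (i + 1)) (fun i ↦ f (i + 1)) (f 0 x0)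
        (fun j ↦ symmIteratedFDeriv ℝ (f 0) x0 (finsetPreimage q {j}) v) (extendChain π) i B := by
  have hkm : k ≤ m := by simpa using Fintype.card_le_of_surjective q hq
  have hf' {j n : ℕ} (hj : j ≤ i + 1) (hn : n ≤ m) : ContDiffAt ℝ n (f j) (seqPt f x0 j) :=
    (hf j hj).of_le (Nat.cast_le.2 hn)
  induction i generalizing B with
  | zero =>
    have hB : B.card ≤ m := (card_finset_fin_le B).trans hkm
    have hfilter : (Finset.univ.image singleton).filter (· ⊆ B) = B.image singleton := by
      ext; aesop
    rw [nestedVal_succ, extendChain_pullbackChain_one, fiberPartition,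
      filter_subset_image_finsetPreimage hq, hfilter, Finset.image_image,
      symmIteratedFDeriv_image (hf' le_rfl hB)
        ((finsetPreimage_injective hq).comp Finset.singleton_injective).injOn,
      nestedVal_zero (X := fun i ↦ X (i + 1)) (x0 := f 0 x0) (hf' le_rfl hB)]
    congr 1
    funext j
    exact nestedVal_zero (hf' (Nat.zero_le _) (card_finset_fin_le _)) v _
  | succ i ih =>
    have hcard : ((extendChain π (i + 1)).filter (· ⊆ B)).card ≤ m :=
      (Finset.card_filter_le _ _).trans ((card_extendChain_le hπ _).trans hkm)
    rw [nestedVal_succ, extendChain_pullbackChain_add_two, filter_subset_image_finsetPreimage hq,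
      symmIteratedFDeriv_image (hf' le_rfl hcard) (finsetPreimage_injective hq).injOn,
      nestedVal_succ, seqPt_succ_eq_seqPt]
    congr 1
    funext C
    exact ih (fun j hj ↦ hf j (hj.trans (Nat.le_succ _))) C fun hj ↦ hf' (hj.trans (Nat.le_succ _))

end NestedVal

/-- Higher-order chain rule for multicomposite functions
(Proposition `prop:multicompositechainrule`): the `m`-th derivative of
`f_l ∘ ⋯ ∘ f₁ ∘ f₀` is the sum over all nested partitions `𝒫 ∈ 𝒫^l(m)` — encoded
as refinement chains of length `l` of partitions of `{1,…,m}` — of `∇_𝒫 f_l|_{x_l}`. -/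
theorem multicomposite_higher_order_chain_rule
    (f : ∀ i, X i → X (i + 1)) (l m : ℕ)
    (Ω : ∀ i, Set (X i)) (hΩ : ∀ i, IsOpen (Ω i))
    (hmap : ∀ i, Set.MapsTo (f i) (Ω i) (Ω (i + 1)))
    (x0 : X 0) (hx : x0 ∈ Ω 0)
    (hdiff : ∀ i, i ≤ l → ContDiffAt ℝ m (f i) (seqPt f x0 i))
    (v : Fin m → X 0) :
    iteratedFDeriv ℝ m (compChain f l) x0 v =
      ∑ π ∈ Finset.univ.filter (IsNestedChain m l),
        nestedVal f x0 v
          (fun n => if h : n - 1 < l ∧ 1 ≤ n then π ⟨n - 1, h.1⟩ else ∅) l Finset.univ := by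
  clear hx hmap hΩ Ω
  induction l generalizing X m with
  | zero =>
    rw [sum_isNestedChain_zero, nestedVal_zero (by simpa [seqPt] using hdiff 0 le_rfl)]
    exact iteratedFDeriv_comp_eq_symmIteratedFDeriv (hdiff 0 le_rfl) injective_id (by simp) v
  | succ l ih =>
    have hdiff' (i : ℕ) (hi : i ≤ l) := seqPt_succ_eq_seqPt f x0 i ▸ hdiff (i + 1) (by omega)
    calc iteratedFDeriv ℝ m (compChain f (l + 1)) x0 v
      _ = ∑ c : OrderedFinpartition m, iteratedFDeriv ℝ c.length
            (compChain (X := fun i ↦ X (i + 1)) (fun i ↦ f (i + 1)) l) (f 0 x0)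
            fun i ↦ symmIteratedFDeriv ℝ (f 0) x0 (finsetPreimage c.index {i}) v := by
        rw [compChain_succ_eq_comp]
        exact iteratedFDeriv_comp_apply_eq_sum (contDiffAt_compChain hdiff') (hdiff 0 (by omega)) v
      _ = ∑ c : OrderedFinpartition m, ∑ π with IsNestedChain c.length l π,
            nestedVal f x0 v (extendChain (pullbackChain c.index π)) (l + 1) Finset.univ := by
        refine Finset.sum_congr rfl fun c _ ↦ (ih _ _ _
          (fun i hi ↦ (hdiff' i hi).of_le (Nat.cast_le.2 c.length_le)) _).trans
          (Finset.sum_congr rfl fun π hπ ↦ ?_)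
        rw [← finsetPreimage_univ c.index]
        exact (nestedVal_pullbackChain (index_surjective c) (Finset.mem_filter.1 hπ).2.1 hdiff v
          Finset.univ).symm
      _ = _ := (sum_isNestedChain_succ fun π ↦
        nestedVal f x0 v (extendChain π) (l + 1) Finset.univ).symm
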